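/- Let μ > 0, r > 0, 0 < α < 1, and let f : ℝⁿ → ℝ be a continuously differentiable μ-strongly convex function with global minimizer x*. Let x : (0,∞) → ℝⁿ be a twice differentiable solution of ẍ(t) + (r/t^α)·ẋ(t) + ∇f(x(t)) = 0 for all t > 0. Then for every ε with 0 < ε < 2/3, f(x(t)) − f(x*) = O( e^{−(2/3 − ε)·(r/(1−α))·t^{1−α}} ) as t → ∞. -/

import Mathlib

open scoped RealInnerProductSpace

/-!
Let `γ` be the damping coefficient, `σ = γ'/γ`, `z = x - x*` and `w = v + (2/3) γ z`. The energy
`L = f(x) - f(x*) + ‖w‖² / 2` satisfies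
`L' = γ (d ⟪w, z⟫ - (2/3) ⟪∇f(x), z⟫ - (1/3) ‖w‖²)` with `d = (2/9) γ + (2/3) σ`. Had `w` been
defined with a factor `c`, the two parts `f(x) - f(x*)` and `‖w‖² / 2` of `L` would decay at the
rates `c γ` and `2 (1 - c) γ`, which balance at `c = 2/3`. Strong convexity turns `⟪∇f(x), z⟫` into
`f(x) - f(x*)` plus a multiple of `‖z‖²`, and since `d → 0`, the cross term `d ⟪w, z⟫` is eventually
absorbed by that multiple of `‖z‖²` and `(ε/2) ‖w‖²`. Hence `L' ≤ -(2/3 - ε) γ L` eventually, and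
`L` decays like `exp (-(2/3 - ε) ∫ γ)`.
-/

section Asymptotics

open Filter Asymptotics Topology

theorem isBigO_exp_neg_of_hasDerivAt_le {L L' K k : ℝ → ℝ}
    (hL : ∀ᶠ t in atTop, HasDerivAt L (L' t) t)
    (hK : ∀ᶠ t in atTop, HasDerivAt K (k t) t)
    (hLk : ∀ᶠ t in atTop, L' t ≤ -(k t * L t))
    (hL0 : ∀ᶠ t in atTop, 0 ≤ L t) :
    L =O[atTop] fun t ↦ Real.exp (-K t) := by
  obtain ⟨T, hT⟩ := eventually_atTop.1 (hL.and (hK.and (hLk.and hL0)))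
  have hderiv (t : ℝ) (ht : T ≤ t) : HasDerivAt (fun t ↦ L t * Real.exp (K t))
      (L' t * Real.exp (K t) + L t * (Real.exp (K t) * k t)) t :=
    (hT t ht).1.mul (hT t ht).2.1.exp
  have hanti : AntitoneOn (fun t ↦ L t * Real.exp (K t)) (Set.Ici T) := by
    refine antitoneOn_of_hasDerivWithinAt_nonpos (convex_Ici T)
      (fun t ht ↦ (hderiv t ht).continuousAt.continuousWithinAt)
      (fun t ht ↦ (hderiv t (interior_subset ht)).hasDerivWithinAt) fun t ht ↦ ?_
    have hle : (L' t + k t * L t) * Real.exp (K t) ≤ 0 :=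
      mul_nonpos_of_nonpos_of_nonneg
        (by linarith [(hT t (interior_subset ht)).2.2.1]) (Real.exp_pos _).le
    linarith
  refine IsBigO.of_bound (L T * Real.exp (K T)) (eventually_atTop.2 ⟨T, fun t ht ↦ ?_⟩)
  rw [Real.norm_of_nonneg (hT t ht).2.2.2, Real.norm_of_nonneg (Real.exp_pos _).le, Real.exp_neg,
    ← div_eq_mul_inv, le_div_iff₀ (Real.exp_pos _)]
  exact hanti Set.self_mem_Ici ht ht

theorem exists_pos_forall_ge_le_mul_of_isBigO {u g : ℝ → ℝ} (h : u =O[atTop] g)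
    (hg : ∀ t, 0 ≤ g t) :
    ∃ T C : ℝ, 0 < T ∧ 0 < C ∧ ∀ t, T ≤ t → u t ≤ C * g t := by
  obtain ⟨C, hC, hu⟩ := h.exists_pos
  obtain ⟨T, hT⟩ := eventually_atTop.1 (hu.bound.and (eventually_gt_atTop 0))
  refine ⟨T, C, (hT T le_rfl).2, hC, fun t ht ↦ (Real.le_norm_self _).trans ?_⟩
  simpa only [Real.norm_of_nonneg (hg t)] using (hT t ht).1

theorem hasDerivAt_div_rpow (r α : ℝ) {t : ℝ} (ht : 0 < t) :
    HasDerivAt (fun t : ℝ ↦ r / t ^ α) (-(α / t) * (r / t ^ α)) t := by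
  refine ((hasDerivAt_const t r).div (Real.hasDerivAt_rpow_const (Or.inl ht.ne'))
    (Real.rpow_pos_of_pos ht α).ne').congr_deriv ?_
  rw [Real.rpow_sub_one ht.ne']
  field_simp
  ring

theorem hasDerivAt_div_one_sub_mul_rpow (r : ℝ) {α t : ℝ} (hα : α ≠ 1) (ht : 0 < t) :
    HasDerivAt (fun t : ℝ ↦ r / (1 - α) * t ^ (1 - α)) (r / t ^ α) t := by
  have hα' : 1 - α ≠ 0 := sub_ne_zero.2 hα.symm
  refine ((Real.hasDerivAt_rpow_const (Or.inl ht.ne')).const_mul _).congr_deriv ?_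
  rw [sub_sub_cancel_left, Real.rpow_neg ht.le]
  field_simp

theorem tendsto_div_rpow_atTop (r : ℝ) {α : ℝ} (hα : 0 < α) :
    Tendsto (fun t : ℝ ↦ r / t ^ α) atTop (𝓝 0) :=
  tendsto_const_nhds.div_atTop (tendsto_rpow_atTop hα)

end Asymptotics

section Lyapunov

variable {E : Type*} [NormedAddCommGroup E] [InnerProductSpace ℝ E]

theorem two_mul_mul_inner_le {p q d : ℝ} (hp : 0 < p) (hd : d ^ 2 ≤ p * q) (w z : E) :
    2 * (d * ⟪w, z⟫) ≤ p * ‖w‖ ^ 2 + q * ‖z‖ ^ 2 := by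
  have hsq : ‖p • w - d • z‖ ^ 2 = p ^ 2 * ‖w‖ ^ 2 - 2 * (p * (d * ⟪w, z⟫)) + d ^ 2 * ‖z‖ ^ 2 := by
    rw [norm_sub_sq_real, norm_smul, norm_smul, mul_pow, mul_pow, Real.norm_eq_abs,
      Real.norm_eq_abs, sq_abs, sq_abs, real_inner_smul_left, real_inner_smul_right]
  have hdz : d ^ 2 * ‖z‖ ^ 2 ≤ p * q * ‖z‖ ^ 2 := by gcongr
  refine le_of_mul_le_mul_left ?_ hp
  linarith [sq_nonneg ‖p • w - d • z‖]

/-- The velocity `v` of a point `x`, corrected by `2/3` of the damping coefficient `γ` times the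
displacement of `x` from the minimizer. -/
noncomputable def shiftedVelocity (xstar : E) (γ : ℝ) (x v : E) : E :=
  v + (2 / 3 * γ) • (x - xstar)

/-- The Lyapunov function of the damped flow on phase space: potential energy above the minimum,
plus kinetic energy of the shifted velocity. -/
noncomputable def nagLyapunov (f : E → ℝ) (xstar : E) (γ : ℝ) (x v : E) : ℝ :=
  f x - f xstar + ‖shiftedVelocity xstar γ x v‖ ^ 2 / 2

/-- The derivative of `nagLyapunov` along the damped flow, as a function on phase space: `g` is the
gradient of the potential at `x` and `σ` the logarithmic derivative of the damping coefficient. -/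
noncomputable def nagLyapunovRate (xstar g : E) (γ σ : ℝ) (x v : E) : ℝ :=
  γ * ((2 / 9 * γ + 2 / 3 * σ) * ⟪shiftedVelocity xstar γ x v, x - xstar⟫
    - 2 / 3 * ⟪g, x - xstar⟫ - 1 / 3 * ‖shiftedVelocity xstar γ x v‖ ^ 2)

theorem sub_le_nagLyapunov (f : E → ℝ) (xstar : E) (γ : ℝ) (x v : E) :
    f x - f xstar ≤ nagLyapunov f xstar γ x v :=
  le_add_of_nonneg_right (by positivity)

theorem hasDerivAt_shiftedVelocity {xstar g : E} {γ : ℝ → ℝ} {x v : ℝ → E} {σ t : ℝ}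
    (hγ : HasDerivAt γ (σ * γ t) t) (hx : HasDerivAt x (v t) t)
    (hv : HasDerivAt v (-(γ t • v t) - g) t) :
    HasDerivAt (fun t ↦ shiftedVelocity xstar (γ t) (x t) (v t))
      (-(γ t / 3) • shiftedVelocity xstar (γ t) (x t) (v t)
        + (γ t * (2 / 9 * γ t + 2 / 3 * σ)) • (x t - xstar) - g) t := by
  refine (hv.add ((hγ.const_mul (2 / 3)).smul (hx.sub_const xstar))).congr_deriv ?_
  simp only [shiftedVelocity]
  module

theorem hasDerivAt_nagLyapunov [CompleteSpace E] {f : E → ℝ} {xstar : E} {γ : ℝ → ℝ}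
    {x v : ℝ → E} {σ t : ℝ} (hf : DifferentiableAt ℝ f (x t)) (hγ : HasDerivAt γ (σ * γ t) t)
    (hx : HasDerivAt x (v t) t) (hv : HasDerivAt v (-(γ t • v t) - gradient f (x t)) t) :
    HasDerivAt (fun t ↦ nagLyapunov f xstar (γ t) (x t) (v t))
      (nagLyapunovRate xstar (gradient f (x t)) (γ t) σ (x t) (v t)) t := by
  have hfx : HasDerivAt (fun t ↦ f (x t)) ⟪gradient f (x t), v t⟫ t :=
    (hf.hasGradientAt.hasFDerivAt.comp_hasDerivAt t hx).congr_deriv (by simp)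
  have hw := hasDerivAt_shiftedVelocity (xstar := xstar) hγ hx hv
  refine ((hfx.sub_const (f xstar)).add (hw.norm_sq.div_const 2)).congr_deriv ?_
  rw [nagLyapunovRate]
  set w := shiftedVelocity xstar (γ t) (x t) (v t) with hw_def
  have hv_eq : v t = w - (2 / 3 * γ t) • (x t - xstar) := eq_sub_of_add_eq hw_def.symm
  rw [hv_eq]
  simp only [inner_add_right, inner_sub_right, real_inner_smul_right, real_inner_self_eq_norm_sq,
    real_inner_comm w (gradient f (x t))]
  ring

theorem nagLyapunovRate_le {f : E → ℝ} {xstar g x v : E} {μ γ σ ε : ℝ} (hγ : 0 ≤ γ) (hε : 0 < ε)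
    (hmin : f xstar ≤ f x) (hsc : f x + ⟪g, xstar - x⟫ + μ / 2 * ‖xstar - x‖ ^ 2 ≤ f xstar)
    (hd : (2 / 9 * γ + 2 / 3 * σ) ^ 2 ≤ ε * (2 / 3 * μ)) :
    nagLyapunovRate xstar g γ σ x v ≤ -((2 / 3 - ε) * γ * nagLyapunov f xstar γ x v) := by
  rw [← neg_sub x xstar, inner_neg_right, norm_neg] at hsc
  have hcross := two_mul_mul_inner_le hε hd (shiftedVelocity xstar γ x v) (x - xstar)
  have hεF : 0 ≤ ε * (f x - f xstar) := mul_nonneg hε.le (sub_nonneg.2 hmin)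
  calc
    nagLyapunovRate xstar g γ σ x v ≤ γ * -((2 / 3 - ε) * nagLyapunov f xstar γ x v) := by
      refine mul_le_mul_of_nonneg_left ?_ hγ
      rw [nagLyapunov]
      linarith
    _ = -((2 / 3 - ε) * γ * nagLyapunov f xstar γ x v) := by ring

end Lyapunov

section Rate

open Filter Asymptotics Topology

theorem generalized_nag_flow_rate_general {E : Type*} [NormedAddCommGroup E]
    [InnerProductSpace ℝ E] [CompleteSpace E] {μ ε : ℝ} (hμ : 0 < μ) (hε : 0 < ε)
    {f : E → ℝ} {xstar : E} (hf : Differentiable ℝ f) (hmin : ∀ y, f xstar ≤ f y)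
    (hsc : ∀ y, f y + ⟪gradient f y, xstar - y⟫ + μ / 2 * ‖xstar - y‖ ^ 2 ≤ f xstar)
    {γ σ Γ : ℝ → ℝ} (hγ0 : ∀ᶠ t in atTop, 0 ≤ γ t)
    (hγ : ∀ᶠ t in atTop, HasDerivAt γ (σ t * γ t) t)
    (hΓ : ∀ᶠ t in atTop, HasDerivAt Γ (γ t) t)
    (hγ_lim : Tendsto γ atTop (𝓝 0)) (hσ_lim : Tendsto σ atTop (𝓝 0))
    {x v a : ℝ → E} (hx : ∀ᶠ t in atTop, HasDerivAt x (v t) t)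
    (hv : ∀ᶠ t in atTop, HasDerivAt v (a t) t)
    (hode : ∀ᶠ t in atTop, a t + γ t • v t + gradient f (x t) = 0) :
    (fun t ↦ f (x t) - f xstar) =O[atTop] fun t ↦ Real.exp (-((2 / 3 - ε) * Γ t)) := by
  have hd_lim : Tendsto (fun t ↦ (2 / 9 * γ t + 2 / 3 * σ t) ^ 2) atTop (𝓝 0) := by
    simpa using ((hγ_lim.const_mul (2 / 9)).add (hσ_lim.const_mul (2 / 3))).pow 2
  have hd : ∀ᶠ t in atTop, (2 / 9 * γ t + 2 / 3 * σ t) ^ 2 ≤ ε * (2 / 3 * μ) :=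
    hd_lim.eventually (eventually_le_nhds (by positivity))
  have hF0 (t : ℝ) : 0 ≤ f (x t) - f xstar := sub_nonneg.2 (hmin (x t))
  have hFL (t : ℝ) : f (x t) - f xstar ≤ nagLyapunov f xstar (γ t) (x t) (v t) :=
    sub_le_nagLyapunov f xstar (γ t) (x t) (v t)
  have hL : ∀ᶠ t in atTop, HasDerivAt (fun t ↦ nagLyapunov f xstar (γ t) (x t) (v t))
      (nagLyapunovRate xstar (gradient f (x t)) (γ t) (σ t) (x t) (v t)) t := by
    filter_upwards [hγ, hx, hv, hode] with t hγt hxt hvt hodet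
    have ha : a t = -(γ t • v t) - gradient f (x t) := by
      rw [eq_sub_iff_add_eq, eq_neg_iff_add_eq_zero, ← hodet]
      abel
    exact hasDerivAt_nagLyapunov (hf (x t)) hγt hxt (ha ▸ hvt)
  have hL_le : ∀ᶠ t in atTop, nagLyapunovRate xstar (gradient f (x t)) (γ t) (σ t) (x t) (v t) ≤
      -((2 / 3 - ε) * γ t * nagLyapunov f xstar (γ t) (x t) (v t)) := by
    filter_upwards [hγ0, hd] with t hγt hdt
    exact nagLyapunovRate_le hγt hε (hmin (x t)) (hsc (x t)) hdt
  refine (IsBigO.of_norm_le fun t ↦ (Real.norm_of_nonneg (hF0 t)).trans_le (hFL t)).trans ?_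
  exact isBigO_exp_neg_of_hasDerivAt_le hL (hΓ.mono fun t h ↦ h.const_mul (2 / 3 - ε)) hL_le
    (.of_forall fun t ↦ (hF0 t).trans (hFL t))

end Rate

/-- For `μ > 0`, `r > 0`, `0 < α < 1` and a continuously differentiable
`μ`-strongly convex `f` with minimizer `x*`, any twice differentiable solution (on `(0,∞)`)
of the generalized NAG flow `ẍ(t) + (r/t^α)·ẋ(t) + ∇f(x(t)) = 0` satisfies, for every
`0 < ε < 2/3`, `f(x(t)) − f(x*) = O(e^{−(2/3 − ε)(r/(1−α))t^{1−α}})` as `t → ∞`. -/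
theorem generalized_nag_flow_rate {n : ℕ}
    (μ r α : ℝ) (hμ : 0 < μ) (hr : 0 < r) (hα0 : 0 < α) (hα1 : α < 1)
    (f : EuclideanSpace ℝ (Fin n) → ℝ)
    (xstar : EuclideanSpace ℝ (Fin n))
    (hf : ContDiff ℝ 1 f)
    (hmin : ∀ y, f xstar ≤ f y)
    (hsc : ∀ y z : EuclideanSpace ℝ (Fin n),
      f z ≥ f y + ⟪gradient f y, z - y⟫ + μ / 2 * ‖z - y‖ ^ 2)
    (x v a : ℝ → EuclideanSpace ℝ (Fin n))
    (hx : ∀ t : ℝ, 0 < t → HasDerivAt x (v t) t)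
    (hv : ∀ t : ℝ, 0 < t → HasDerivAt v (a t) t)
    (hode : ∀ t : ℝ, 0 < t →
      a t + (r / t ^ α) • v t + gradient f (x t) = 0) :
    ∀ ε : ℝ, 0 < ε → ε < 2 / 3 →
      ∃ T C : ℝ, 0 < T ∧ 0 < C ∧
        ∀ t : ℝ, T ≤ t → f (x t) - f xstar
          ≤ C * Real.exp (-((2 / 3 - ε) * (r / (1 - α)) * t ^ (1 - α))) := by
  intro ε hε _
  have hpos := Filter.eventually_gt_atTop (0 : ℝ)
  have hrate := generalized_nag_flow_rate_general hμ hε (hf.differentiable one_ne_zero) hmin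
    (fun y ↦ hsc y xstar) (hpos.mono fun t ht ↦ by positivity)
    (hpos.mono fun t ht ↦ hasDerivAt_div_rpow r α ht)
    (hpos.mono fun t ht ↦ hasDerivAt_div_one_sub_mul_rpow r hα1.ne ht)
    (tendsto_div_rpow_atTop r hα0)
    (by simpa using (tendsto_div_rpow_atTop α one_pos).neg)
    (hpos.mono hx) (hpos.mono hv) (hpos.mono hode)
  simpa only [mul_assoc] using
    exists_pos_forall_ge_le_mul_of_isBigO hrate fun t ↦ (Real.exp_pos _).le
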